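/- Let g ∈ C₀(ℝ) (continuous, vanishing at infinity), g not identically zero. If Σ_{k=1}^m c_k g(x + t_k) = 0 for all x ∈ ℝ with t₁,…,t_m distinct reals, then c₁ = ⋯ = c_m = 0. -/

import Mathlib

open Filter

/-!
A relation `∑ c_k g(x + t_k) = 0` says that the Fourier transform `S` of `g`, a tempered
distribution, is annihilated by the trigonometric polynomial `p(ξ) = ∑ c_k e^{2πi t_k ξ}`. Were
`p ≠ 0`, its zeros would have finite order, so near each frequency `x` some power of
`e^{2πiξ} - e^{2πix}` is a multiple of `p` and annihilates `S` too. But if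
`(e^{2πiξ} - λ) S = 0` with `|λ| = 1`, then `e^{2πinξ} S = λⁿ S` does not decay as `n → ∞`, whereas
the decay of `g` at `+∞` makes `e^{2πinξ} S` tend weakly to zero. So `S` vanishes near every
frequency, whence `g = 0`.
-/

open MeasureTheory Set TemperedDistribution Distribution
open scoped ContDiff FourierTransform SchwartzMap Topology

section LocalVanishing

variable {V F : Type*} [NormedAddCommGroup V] [NormedSpace ℝ V] [NormedAddCommGroup F]
  [NormedSpace ℂ F] {S : 𝓢'(V, F)}

theorem smulLeftCLM_one (S : 𝓢'(V, F)) : smulLeftCLM F 1 S = S :=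
  (smulLeftCLM_const 1 S).trans (one_smul _ _)

theorem exists_smulLeftCLM_eq_zero_of_notMem_dsupport [FiniteDimensional ℝ V] {x : V}
    (hx : x ∉ dsupport S) :
    ∃ a : V → ℂ, a.HasTemperateGrowth ∧ a =ᶠ[𝓝 x] 1 ∧ smulLeftCLM F a S = 0 := by
  obtain ⟨r, hr, hS⟩ := (Metric.nhds_basis_closedBall.notMem_dsupport).1 hx
  let β : ContDiffBump x := ⟨r / 2, r, by positivity, by linarith⟩
  have hβ : (fun y ↦ (β y : ℂ)).HasTemperateGrowth :=
    HasCompactSupport.hasTemperateGrowth (β.hasCompactSupport.comp_left Complex.ofReal_zero)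
      (Complex.ofRealCLM.contDiff.comp β.contDiff)
  refine ⟨fun y ↦ β y, hβ, β.eventuallyEq_one.mono fun y hy ↦ by simp [hy], ?_⟩
  ext φ
  rw [smulLeftCLM_apply_apply]
  refine hS _ ?_
  calc tsupport (SchwartzMap.smulLeftCLM ℂ (fun y ↦ (β y : ℂ)) φ)
      ⊆ tsupport (fun y ↦ (β y : ℂ)) :=
        (SchwartzMap.tsupport_smulLeftCLM_subset _ _).trans inter_subset_right
    _ ⊆ tsupport β := closure_mono (Function.support_comp_subset Complex.ofReal_zero β)
    _ = Metric.closedBall x r := β.tsupport_eq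

theorem apply_eq_zero_of_disjoint_dsupport [FiniteDimensional ℝ V] {φ : 𝓢(V, ℂ)}
    (hφ : HasCompactSupport φ) (h : Disjoint (tsupport φ) (dsupport S)) : S φ = 0 := by
  obtain ⟨a, ha, haφ, haS⟩ : ∃ a : V → ℂ, a.HasTemperateGrowth ∧ EqOn a 1 (tsupport φ) ∧
      smulLeftCLM F a S = 0 := by
    refine IsCompact.induction_on hφ ?_ ?_ ?_ ?_
    · exact ⟨0, .zero, eqOn_empty _ _, (smulLeftCLM_const 0 S).trans (zero_smul _ _)⟩
    · rintro s t hst ⟨a, ha, hat, haS⟩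
      exact ⟨a, ha, hat.mono hst, haS⟩
    · rintro s t ⟨a, ha, has, haS⟩ ⟨b, hb, hbt, hbS⟩
      refine ⟨a + b - a * b, by fun_prop, ?_, ?_⟩
      · rintro x (hx | hx)
        · simp [has hx]
        · simp [hbt hx]
      · rw [smulLeftCLM_sub (by fun_prop) (by fun_prop), smulLeftCLM_add ha hb]
        simp [haS, hbS, ← smulLeftCLM_smulLeftCLM_apply ha hb]
    · intro x hx
      obtain ⟨a, ha, hax, haS⟩ :=
        exists_smulLeftCLM_eq_zero_of_notMem_dsupport (disjoint_left.1 h hx)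
      exact ⟨{y | a y = 1}, mem_nhdsWithin_of_mem_nhds hax, a, ha, fun _ hy ↦ hy, haS⟩
  have hφa : SchwartzMap.smulLeftCLM ℂ a φ = φ := by
    ext x
    rw [SchwartzMap.smulLeftCLM_apply_apply ha]
    by_cases hx : x ∈ tsupport φ
    · simp [haφ hx]
    · simp [image_eq_zero_of_notMem_tsupport hx]
  rw [← hφa, ← smulLeftCLM_apply_apply, haS, zero_apply]

theorem exists_schwartzMap_eq_mul_of_contDiffOn {U : Set V} (hU : IsOpen U) {b : V → ℂ}
    (hb : ContDiffOn ℝ ∞ b U) {u : 𝓢(V, ℂ)} (hu : HasCompactSupport u) (huU : tsupport u ⊆ U) :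
    ∃ w : 𝓢(V, ℂ), ∀ x, w x = b x * u x := by
  refine ⟨HasCompactSupport.toSchwartzMap (f := fun x ↦ b x * u x) hu.mul_left ?_, fun _ ↦ rfl⟩
  rw [← contMDiff_iff_contDiff]
  refine contMDiff_of_tsupport fun x hx ↦ ContDiffAt.contMDiffAt ?_
  exact (hb.contDiffAt (hU.mem_nhds (huU (tsupport_mul_subset_right hx)))).mul
    u.smooth'.contDiffAt

theorem isVanishingOn_smulLeftCLM_of_eqOn_mul [ProperSpace V] {U : Set V} (hU : IsOpen U)
    (hU' : Bornology.IsBounded U) {p q b : V → ℂ} (hp : p.HasTemperateGrowth)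
    (hq : q.HasTemperateGrowth) (hb : ContDiffOn ℝ ∞ b U) (h : EqOn q (b * p) U)
    (hS : IsVanishingOn (smulLeftCLM F p S) U) : IsVanishingOn (smulLeftCLM F q S) U := by
  intro u hu
  obtain ⟨w, hw⟩ := exists_schwartzMap_eq_mul_of_contDiffOn hU hb
    (Metric.isCompact_of_isClosed_isBounded (isClosed_tsupport u) (hU'.subset hu)) hu
  have hwu : tsupport w ⊆ tsupport u := by
    rw [show ⇑w = fun x ↦ b x * u x from funext hw]
    exact tsupport_mul_subset_right
  have hqp : SchwartzMap.smulLeftCLM ℂ q u = SchwartzMap.smulLeftCLM ℂ p w := by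
    ext x
    simp only [SchwartzMap.smulLeftCLM_apply_apply hq, SchwartzMap.smulLeftCLM_apply_apply hp, hw,
      smul_eq_mul]
    by_cases hx : x ∈ U
    · rw [h hx, Pi.mul_apply]
      ring
    · simp [image_eq_zero_of_notMem_tsupport fun hxu ↦ hx (hu hxu)]
  rw [smulLeftCLM_apply_apply, hqp, ← smulLeftCLM_apply_apply]
  exact hS w (hwu.trans hu)

end LocalVanishing

section AnalyticDivision

variable {𝕜 A : Type*} [NontriviallyNormedField 𝕜] [NormedField A] [NormedAlgebra 𝕜 A]

theorem exists_pow_eventuallyEq_mul_of_analyticAt {p q : 𝕜 → A} {x : 𝕜}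
    (hp : AnalyticAt 𝕜 p x) (hp' : analyticOrderAt p x ≠ ⊤) (hq : AnalyticAt 𝕜 q x)
    (hqx : q x = 0) :
    ∃ (n : ℕ) (b : 𝕜 → A), AnalyticAt 𝕜 b x ∧ q ^ n =ᶠ[𝓝 x] b * p := by
  obtain ⟨h, hh, hhx, hph⟩ := hp.analyticOrderAt_ne_top.1 hp'
  obtain ⟨k, hk, hqk⟩ := (natCast_le_analyticOrderAt hq (n := 1)).1
    (Order.one_le_iff_ne_zero.2 (hq.analyticOrderAt_ne_zero.2 hqx))
  refine ⟨analyticOrderNatAt p x, k ^ analyticOrderNatAt p x / h, (hk.pow _).div hh hhx, ?_⟩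
  filter_upwards [hph, hqk, hh.continuousAt.eventually_ne hhx] with z hpz hqz hhz
  simp only [Pi.pow_apply, Pi.mul_apply, Pi.div_apply, hpz, hqz, pow_one, smul_pow, mul_smul_comm,
    div_mul_cancel₀ _ hhz]

end AnalyticDivision

section Characters

/-- The unitary character `ξ ↦ exp(2πitξ)` of `ℝ` of frequency `t`, as a complex-valued function.
Multiplication by it on the Fourier side is translation by `t`. -/
noncomputable def realChar (t ξ : ℝ) : ℂ :=
  𝐞 (t * ξ)

namespace realChar

theorem eq_cexp (t ξ : ℝ) : realChar t ξ = Complex.exp (2 * Real.pi * t * Complex.I * ξ) := by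
  simp only [realChar, Real.fourierChar_apply]
  congr 1
  push_cast
  ring

@[simp]
theorem norm_apply (t ξ : ℝ) : ‖realChar t ξ‖ = 1 :=
  Circle.norm_coe _

@[simp]
theorem zero_left : realChar 0 = 1 := by
  ext ξ
  simp [realChar]

theorem add_left (s t : ℝ) : realChar (s + t) = realChar s * realChar t := by
  ext ξ
  simp [realChar, add_mul, AddChar.map_add_eq_mul]

theorem analyticAt (t ξ : ℝ) : AnalyticAt ℝ (realChar t) ξ := by
  rw [funext (eq_cexp t)]
  exact analyticAt_cexp.restrictScalars.comp
    (analyticAt_const.mul (Complex.ofRealCLM.analyticAt ξ))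

theorem iteratedDeriv_eq (t : ℝ) (n : ℕ) :
    iteratedDeriv n (realChar t) = fun ξ ↦ (2 * Real.pi * Complex.I * t) ^ n * realChar t ξ := by
  induction n with
  | zero => simp
  | succ n ih =>
    ext ξ
    have h : HasDerivAt (realChar t) (t • (2 * Real.pi * Complex.I * realChar t ξ)) ξ :=
      (Real.hasDerivAt_fourierChar (t * ξ)).scomp ξ (hasDerivAt_const_mul t)
    rw [iteratedDeriv_succ, ih, (h.const_mul _).deriv, Complex.real_smul]
    ring

@[fun_prop]
theorem hasTemperateGrowth (t : ℝ) : (realChar t).HasTemperateGrowth := by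
  refine ⟨AnalyticOnNhd.contDiff fun ξ _ ↦ analyticAt t ξ, fun n ↦
    ⟨0, ‖(2 * Real.pi * Complex.I * t) ^ n‖, fun ξ ↦ ?_⟩⟩
  simp only [norm_iteratedFDeriv_eq_norm_iteratedDeriv, iteratedDeriv_eq, norm_mul, norm_apply,
    pow_zero, le_refl]

theorem hasTemperateGrowth_const_smul (c : ℂ) (t : ℝ) : (c • realChar t).HasTemperateGrowth :=
  (Function.HasTemperateGrowth.const c).mul (hasTemperateGrowth t)

theorem linearIndependent : LinearIndependent ℂ realChar := by
  let χ (t : ℝ) : Multiplicative ℝ →* ℂ :=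
    { toFun ξ := realChar t ξ.toAdd
      map_one' := by simp [realChar]
      map_mul' ξ η := by simp [realChar, mul_add, AddChar.map_add_eq_mul] }
  have hχ : Function.Injective χ := fun s t hst ↦ by
    refine BoundedContinuousFunction.ext_of_char_eq (L := LinearMap.mul ℝ ℝ)
      Real.continuous_fourierChar Real.fourierChar_ne_one continuous_mul
      (fun v hv h ↦ hv (by simpa using congr($h 1))) fun ξ ↦ ?_
    exact DFunLike.congr_fun hst (Multiplicative.ofAdd ξ)
  exact (linearIndependent_monoidHom (Multiplicative ℝ) ℂ).comp χ hχ

theorem linearCombination_eq (l : ℝ →₀ ℂ) : Finsupp.linearCombination ℂ realChar l =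
    fun ξ ↦ ∑ t ∈ l.support, (l t • realChar t) ξ := by
  ext ξ
  simp [Finsupp.linearCombination_apply, Finsupp.sum]

theorem hasTemperateGrowth_linearCombination (l : ℝ →₀ ℂ) :
    (Finsupp.linearCombination ℂ realChar l).HasTemperateGrowth := by
  rw [linearCombination_eq]
  exact .sum fun t _ ↦ hasTemperateGrowth_const_smul (l t) t

theorem analyticOnNhd_linearCombination (l : ℝ →₀ ℂ) :
    AnalyticOnNhd ℝ (Finsupp.linearCombination ℂ realChar l) univ := by
  rw [linearCombination_eq]
  exact Finset.analyticOnNhd_fun_sum _ fun t _ ξ _ ↦ analyticAt_const.mul (analyticAt t ξ)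

theorem fourier_smul {E : Type*} [NormedAddCommGroup E] [NormedSpace ℂ E] (t : ℝ) (f : ℝ → E)
    (x : ℝ) : 𝓕 (fun ξ ↦ realChar t ξ • f ξ) x = 𝓕 f (x - t) := by
  simp only [Real.fourier_real_eq, Circle.smul_def, realChar, smul_smul, ← Circle.coe_mul,
    ← AddChar.map_add_eq_mul]
  simp only [show ∀ ξ : ℝ, -(ξ * x) + t * ξ = -(ξ * (x - t)) from fun ξ ↦ by ring]

end realChar

end Characters

section Pseudofunctions

variable {E : Type*} [NormedAddCommGroup E] [NormedSpace ℂ E]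

/-- A tempered distribution `S` on `ℝ` is a (one-sided) pseudofunction if `e^{2πitξ} S` tends weakly
to zero as `t → +∞`, that is, if its inverse Fourier transform vanishes at `+∞` in the weak sense.
Harmonic analysis usually asks for this as `|t| → ∞`. -/
def IsPseudofunction (S : 𝓢'(ℝ, E)) : Prop :=
  ∀ φ, Tendsto (fun t ↦ smulLeftCLM E (realChar t) S φ) atTop (𝓝 0)

namespace IsPseudofunction

variable {S : 𝓢'(ℝ, E)} {U : Set ℝ}

protected theorem smulLeftCLM (hS : IsPseudofunction S) {a : ℝ → ℂ} (ha : a.HasTemperateGrowth) :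
    IsPseudofunction (smulLeftCLM E a S) := fun φ ↦ by
  refine (hS (SchwartzMap.smulLeftCLM ℂ a φ)).congr fun t ↦ ?_
  rw [← smulLeftCLM_apply_apply, smulLeftCLM_smulLeftCLM_apply (by fun_prop) (by fun_prop),
    smulLeftCLM_smulLeftCLM_apply (by fun_prop) (by fun_prop), mul_comm]

theorem isVanishingOn_of_realChar_sub_const (hS : IsPseudofunction S) {c : ℂ} (hc : ‖c‖ = 1)
    (h : IsVanishingOn (smulLeftCLM E (realChar 1 - fun _ ↦ c) S) U) :
    IsVanishingOn S U := by
  intro u hu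
  have hmul (n : ℕ) : smulLeftCLM E (realChar n) S u = c ^ n • S u := by
    induction n with
    | zero => simp only [Nat.cast_zero, realChar.zero_left, smulLeftCLM_one, pow_zero, one_smul]
    | succ n ih =>
      have hn := h (SchwartzMap.smulLeftCLM ℂ (realChar n) u)
        (((SchwartzMap.tsupport_smulLeftCLM_subset _ _).trans inter_subset_left).trans hu)
      rw [smulLeftCLM_sub (by fun_prop) (by fun_prop), sub_apply, smulLeftCLM_const,
        ← smulLeftCLM_apply_apply, map_sub, sub_apply, map_smul,
        smulLeftCLM_smulLeftCLM_apply (by fun_prop) (by fun_prop),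
        ← realChar.add_left, sub_eq_zero, smul_apply] at hn
      rw [Nat.cast_succ, add_comm, hn, ih, pow_succ', mul_smul]
  have hlim : Tendsto (fun n : ℕ ↦ ‖c ^ n • S u‖) atTop (𝓝 0) := by
    simpa only [hmul, norm_zero, Function.comp_def] using
      ((hS u).comp tendsto_natCast_atTop_atTop).norm
  simpa [norm_smul, hc] using hlim

theorem isVanishingOn_of_realChar_sub_const_pow (hS : IsPseudofunction S) {c : ℂ} (hc : ‖c‖ = 1)
    (n : ℕ)
    (h : IsVanishingOn (smulLeftCLM E ((realChar 1 - fun _ ↦ c) ^ n) S) U) :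
    IsVanishingOn S U := by
  induction n with
  | zero => rwa [pow_zero, smulLeftCLM_one] at h
  | succ n ih =>
    refine ih ((hS.smulLeftCLM (by fun_prop)).isVanishingOn_of_realChar_sub_const hc ?_)
    rwa [smulLeftCLM_smulLeftCLM_apply (by fun_prop) (by fun_prop), ← pow_succ]

theorem dsupport_eq_empty (hS : IsPseudofunction S) {p : ℝ → ℂ} (hp : p.HasTemperateGrowth)
    (hpan : AnalyticOnNhd ℝ p univ) (hp0 : p ≠ 0)
    (hpS : smulLeftCLM E p S = 0) : dsupport S = ∅ := by
  refine eq_empty_iff_forall_notMem.2 fun x ↦ ?_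
  have hord : analyticOrderAt p x ≠ ⊤ := fun h ↦ hp0 <| funext fun y ↦
    hpan.eqOn_zero_of_preconnected_of_eventuallyEq_zero isPreconnected_univ (mem_univ x)
      (analyticOrderAt_eq_top.1 h) (mem_univ y)
  obtain ⟨n, b, hb, hbp⟩ := exists_pow_eventuallyEq_mul_of_analyticAt (hpan x (mem_univ x)) hord
    ((realChar.analyticAt 1 x).sub analyticAt_const) (sub_self (realChar 1 x))
  obtain ⟨r, hr, hball⟩ := Metric.eventually_nhds_iff_ball.1 (hb.eventually_analyticAt.and hbp)
  refine Metric.nhds_basis_ball.notMem_dsupport.2 ⟨r, hr, ?_⟩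
  refine hS.isVanishingOn_of_realChar_sub_const_pow (realChar.norm_apply 1 x) n ?_
  refine isVanishingOn_smulLeftCLM_of_eqOn_mul Metric.isOpen_ball Metric.isBounded_ball hp
    (by fun_prop) (fun y hy ↦ (hball y hy).1.contDiffAt.contDiffWithinAt)
    (fun y hy ↦ (hball y hy).2) ?_
  simp [hpS, IsVanishingOn]

end IsPseudofunction

end Pseudofunctions

section FourierOfBounded

theorem tendsto_integral_smul_of_norm_le {ι α E : Type*} [MeasurableSpace α] {μ : Measure α}
    [NormedAddCommGroup E] [NormedSpace ℂ E] {l : Filter ι} [l.IsCountablyGenerated]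
    {ψ : α → ℂ} (hψ : Integrable ψ μ) {f : ι → α → E} {f₀ : α → E} {C : ℝ}
    (hf : ∀ i, AEStronglyMeasurable (f i) μ) (hC : ∀ i, ∀ᵐ x ∂μ, ‖f i x‖ ≤ C)
    (hlim : ∀ x, Tendsto (fun i ↦ f i x) l (𝓝 (f₀ x))) :
    Tendsto (fun i ↦ ∫ x, ψ x • f i x ∂μ) l (𝓝 (∫ x, ψ x • f₀ x ∂μ)) := by
  refine tendsto_integral_filter_of_dominated_convergence (fun x ↦ ‖ψ x‖ * C)
    (.of_forall fun i ↦ hψ.aestronglyMeasurable.smul (hf i))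
    (.of_forall fun i ↦ ?_) (hψ.norm.mul_const C) (.of_forall fun x ↦ (hlim x).const_smul _)
  filter_upwards [hC i] with x hx
  rw [norm_smul]
  gcongr

section Fourier

variable {V E : Type*} [NormedAddCommGroup V] [InnerProductSpace ℝ V] [FiniteDimensional ℝ V]
  [MeasurableSpace V] [BorelSpace V] [NormedAddCommGroup E] [NormedSpace ℂ E] [CompleteSpace E]

theorem integral_fourier_schwartzMap (φ : 𝓢(V, E)) : ∫ x, 𝓕 φ x = φ 0 := by
  rw [← FourierTransform.fourierInv_fourier_eq (F := 𝓢(V, E)) φ, SchwartzMap.fourierInv_coe,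
    Real.fourierInv_eq]
  simp

theorem fourier_toTemperedDistribution_apply {p : ENNReal} [Fact (1 ≤ p)] {g : V → E}
    (hg : MemLp g p) (φ : 𝓢(V, ℂ)) :
    𝓕 (hg.toLp g : 𝓢'(V, E)) φ = ∫ x, 𝓕 φ x • g x := by
  rw [TemperedDistribution.fourier_apply, Lp.toTemperedDistribution_apply]
  exact integral_congr_ae (hg.coeFn_toLp.mono fun x hx ↦ by simp only [hx])

end Fourier

variable {E : Type*} [NormedAddCommGroup E] [NormedSpace ℂ E]

theorem fourier_comp_mul_left {a : ℝ} (ha : a ≠ 0) (f : ℝ → E) (x : ℝ) :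
    𝓕 (fun ξ ↦ f (a * ξ)) x = |a⁻¹| • 𝓕 f (a⁻¹ * x) := by
  simp only [Real.fourier_real_eq]
  rw [← Measure.integral_comp_mul_left (fun ξ ↦ 𝐞 (-(ξ * (a⁻¹ * x))) • f ξ)]
  congr! 4 with ξ
  field_simp

theorem integral_fourier_comp_mul_left_smul {a : ℝ} (ha : a ≠ 0) (f : ℝ → ℂ) (g : ℝ → E) :
    ∫ x, 𝓕 (fun ξ ↦ f (a * ξ)) x • g x = ∫ x, 𝓕 f x • g (a * x) := by
  calc ∫ x, 𝓕 (fun ξ ↦ f (a * ξ)) x • g x = |a⁻¹| • ∫ x, 𝓕 f (a⁻¹ * x) • g x := by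
        simp only [fourier_comp_mul_left ha, smul_assoc, integral_smul]
    _ = ∫ x, 𝓕 f x • g (a * x) := by
        rw [← Measure.integral_comp_mul_left (fun x ↦ 𝓕 f (a⁻¹ * x) • g x)]
        simp only [inv_mul_cancel_left₀ ha]

variable [CompleteSpace E]

theorem smulLeftCLM_realChar_fourier_apply {p : ENNReal} [Fact (1 ≤ p)] {g : ℝ → E}
    (hg : MemLp g p) (t : ℝ) (φ : 𝓢(ℝ, ℂ)) :
    smulLeftCLM E (realChar t) (𝓕 (hg.toLp g : 𝓢'(ℝ, E))) φ = ∫ x, 𝓕 φ x • g (x + t) := by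
  rw [smulLeftCLM_apply_apply, fourier_toTemperedDistribution_apply,
    ← integral_add_right_eq_self _ t]
  refine integral_congr_ae (.of_forall fun x ↦ ?_)
  simp only [SchwartzMap.fourier_coe, SchwartzMap.smulLeftCLM_apply (realChar.hasTemperateGrowth t)]
  congr 1
  simpa using realChar.fourier_smul t φ (x + t)

theorem smulLeftCLM_linearCombination_realChar_fourier_eq_zero {g : ℝ → E} (hg : MemLp g ⊤)
    {l : ℝ →₀ ℂ} (hl : Finsupp.linearCombination ℂ (fun t x ↦ g (x + t)) l = 0) :
    smulLeftCLM E (Finsupp.linearCombination ℂ realChar l) (𝓕 (hg.toLp g : 𝓢'(ℝ, E))) = 0 := by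
  ext φ
  have hint (t : ℝ) : Integrable fun x ↦ 𝓕 φ x • l t • g (x + t) :=
    (𝓕 φ).integrable.smul_of_top_left <|
      (hg.comp_measurePreserving (measurePreserving_add_right volume t)).const_smul (l t)
  calc smulLeftCLM E (Finsupp.linearCombination ℂ realChar l) (𝓕 (hg.toLp g : 𝓢'(ℝ, E))) φ
      = ∑ t ∈ l.support, l t • smulLeftCLM E (realChar t) (𝓕 (hg.toLp g : 𝓢'(ℝ, E))) φ := by
        rw [realChar.linearCombination_eq,
          smulLeftCLM_sum fun t _ ↦ realChar.hasTemperateGrowth_const_smul (l t) t]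
        simp only [smulLeftCLM_smul (realChar.hasTemperateGrowth _), sum_apply, smul_apply]
    _ = ∫ x, 𝓕 φ x • ∑ t ∈ l.support, l t • g (x + t) := by
        simp only [smulLeftCLM_realChar_fourier_apply hg, Finset.smul_sum]
        rw [integral_finsetSum _ fun t _ ↦ hint t]
        simp only [smul_comm _ (l _), integral_smul]
    _ = 0 := by
        have hl' (x : ℝ) : ∑ t ∈ l.support, l t • g (x + t) = 0 := by
          simpa [Finsupp.linearCombination_apply, Finsupp.sum] using congr_fun hl x
        simp only [hl', smul_zero, integral_zero]

theorem isPseudofunction_fourier {g : ℝ → E} (hg : MemLp g ⊤) (hlim : Tendsto g atTop (𝓝 0)) :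
    IsPseudofunction (𝓕 (hg.toLp g : 𝓢'(ℝ, E))) := by
  intro φ
  have hmp (t : ℝ) : MeasurePreserving (· + t) := measurePreserving_add_right volume t
  simp only [smulLeftCLM_realChar_fourier_apply]
  simpa using tendsto_integral_smul_of_norm_le (𝓕 φ).integrable
    (fun t ↦ hg.aestronglyMeasurable.comp_measurePreserving (hmp t))
    (fun t ↦ (hmp t).quasiMeasurePreserving.ae (ae_le_lpNorm_exponent_top hg))
    fun x ↦ hlim.comp (tendsto_atTop_add_const_left _ x tendsto_id)

theorem apply_zero_eq_zero_of_integral_fourier_smul_eq_zero {g : ℝ → E} (hcont : Continuous g)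
    (hbdd : Bornology.IsBounded (range g))
    (h : ∀ φ : 𝓢(ℝ, ℂ), HasCompactSupport φ → ∫ x, 𝓕 φ x • g x = 0) : g 0 = 0 := by
  obtain ⟨C, hC⟩ := hbdd.exists_norm_le
  obtain ⟨φ, hφ, hφ0⟩ : ∃ φ : 𝓢(ℝ, ℂ), HasCompactSupport φ ∧ φ 0 = 1 := by
    let β : ContDiffBump (0 : ℝ) := ⟨1, 2, one_pos, one_lt_two⟩
    have hβ : HasCompactSupport fun x ↦ (β x : ℂ) :=
      β.hasCompactSupport.comp_left Complex.ofReal_zero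
    refine ⟨hβ.toSchwartzMap (Complex.ofRealCLM.contDiff.comp β.contDiff), hβ, ?_⟩
    exact congrArg Complex.ofReal
      (β.one_of_mem_closedBall (Metric.mem_closedBall_self β.rIn_pos.le))
  have hlim : Tendsto (fun a ↦ ∫ x, 𝓕 φ x • g (a * x)) (𝓝[≠] 0) (𝓝 (∫ x, 𝓕 φ x • g 0)) := by
    refine tendsto_integral_smul_of_norm_le (𝓕 φ).integrable
      (fun a ↦ (by fun_prop : Continuous fun x ↦ g (a * x)).aestronglyMeasurable)
      (fun _ ↦ .of_forall fun _ ↦ hC _ (mem_range_self _)) fun x ↦ ?_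
    exact (Continuous.tendsto' (by fun_prop) 0 (g 0) (by simp)).mono_left nhdsWithin_le_nhds
  have hzero : ∀ a ≠ 0, ∫ x, 𝓕 φ x • g (a * x) = 0 := by
    intro a ha
    have hφa : HasCompactSupport fun ξ ↦ φ (a * ξ) := hφ.comp_homeomorph (Homeomorph.mulLeft₀ a ha)
    rw [SchwartzMap.fourier_coe, ← integral_fourier_comp_mul_left_smul ha]
    exact h (hφa.toSchwartzMap (by fun_prop)) hφa
  rw [integral_smul_const, integral_fourier_schwartzMap, hφ0, one_smul] at hlim
  exact tendsto_nhds_unique hlim <| tendsto_const_nhds.congr' <|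
    eventually_mem_nhdsWithin.mono fun a ha ↦ (hzero a ha).symm

end FourierOfBounded

section Translates

variable {E : Type*} [NormedAddCommGroup E] [NormedSpace ℂ E]

theorem eq_zero_of_smulLeftCLM_fourier_eq_zero [CompleteSpace E] {g : ℝ → E}
    (hcont : Continuous g) (hbdd : Bornology.IsBounded (range g)) (hlim : Tendsto g atTop (𝓝 0))
    (hg : MemLp g ⊤) {p : ℝ → ℂ} (hp : p.HasTemperateGrowth) (hpan : AnalyticOnNhd ℝ p univ)
    (hp0 : p ≠ 0) (hpg : smulLeftCLM E p (𝓕 (hg.toLp g : 𝓢'(ℝ, E))) = 0) : g = 0 := by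
  have hsupp := (isPseudofunction_fourier hg hlim).dsupport_eq_empty hp hpan hp0 hpg
  ext y
  simpa using apply_zero_eq_zero_of_integral_fourier_smul_eq_zero (g := fun x ↦ g (x + y))
    (by fun_prop) (hbdd.subset (range_comp_subset_range (· + y) g)) fun φ hφ ↦ by
      rw [← smulLeftCLM_realChar_fourier_apply hg, smulLeftCLM_apply_apply]
      refine apply_eq_zero_of_disjoint_dsupport ?_ (by simp [hsupp])
      rw [SchwartzMap.smulLeftCLM_apply (by fun_prop)]
      exact hφ.mul_left

theorem linearIndependent_translates_of_completeSpace [CompleteSpace E] {g : ℝ → E}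
    (hcont : Continuous g) (hbdd : Bornology.IsBounded (range g)) (hlim : Tendsto g atTop (𝓝 0))
    (hne : g ≠ 0) : LinearIndependent ℂ fun (t x : ℝ) ↦ g (x + t) := by
  obtain ⟨C, hC⟩ := hbdd.exists_norm_le
  have hg : MemLp g ⊤ := memLp_top_of_bound hcont.aestronglyMeasurable C
    (.of_forall fun x ↦ hC _ (mem_range_self x))
  refine linearIndependent_iff.2 fun l hl ↦ linearIndependent_iff.1 realChar.linearIndependent l ?_
  by_contra hp0
  exact hne <| eq_zero_of_smulLeftCLM_fourier_eq_zero hcont hbdd hlim hg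
    (realChar.hasTemperateGrowth_linearCombination l) (realChar.analyticOnNhd_linearCombination l)
    hp0 (smulLeftCLM_linearCombination_realChar_fourier_eq_zero hg hl)

theorem linearIndependent_translates_of_C0_general {g : ℝ → E}
    (hcont : Continuous g) (hbdd : Bornology.IsBounded (range g)) (hlim : Tendsto g atTop (𝓝 0))
    (hne : g ≠ 0) : LinearIndependent ℂ fun (t x : ℝ) ↦ g (x + t) := by
  let ι : E →L[ℂ] UniformSpace.Completion E := UniformSpace.Completion.toComplL
  have hι : LinearIndependent ℂ fun (t x : ℝ) ↦ ι (g (x + t)) := by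
    refine linearIndependent_translates_of_completeSpace (g := ι ∘ g) (by fun_prop) ?_ ?_ ?_
    · rw [range_comp]
      exact ι.lipschitz.isBounded_image hbdd
    · exact ι.map_zero ▸ (ι.continuous.tendsto 0).comp hlim
    · exact fun h ↦ hne (funext fun x ↦ UniformSpace.Completion.coe_injective E (congr_fun h x))
  exact .of_comp (ι.toLinearMap.compLeft ℝ) hι

end Translates

/-- a nonzero continuous function on `ℝ` vanishing at infinity
has linearly independent translates. -/
theorem linearIndependent_translates_of_C0
    {m : ℕ} (g : ℝ → ℂ) (hcont : Continuous g)
    (hzero : Tendsto g (cocompact ℝ) (nhds 0)) (hne : g ≠ 0)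
    (t : Fin m → ℝ) (ht : Function.Injective t) (c : Fin m → ℂ)
    (heq : ∀ x : ℝ, ∑ k, c k * g (x + t k) = 0) :
    c = 0 := by
  have hg := linearIndependent_translates_of_C0_general hcont
    (ZeroAtInftyContinuousMap.isBounded_range ⟨⟨g, hcont⟩, hzero⟩)
    (hzero.mono_left atTop_le_cocompact) hne
  exact funext <| Fintype.linearIndependent_iff.1 (hg.comp t ht) c <|
    funext fun x ↦ by simpa using heq x
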